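/- arXiv:1504.07661 — 6 statements merged into one kernel-verified Lean document; each statement's English description precedes it below -/
import Mathlib

section
/- Let p ∈ ℤ², let q ∈ Q¹_p, and let ≺ be a linear order on ℤ. Then the digital segment R(≺,p,q) contains p and q, contains exactly one point r_c with r_c.x + r_c.y = c for each integer c ∈ [p.x+p.y, q.x+q.y], and for each such c < q.x+q.y the point r_{c+1} equals r_c + (1,0) or r_c + (0,1) (so R(≺,p,q) is the vertex set of a monotone path from p to q in the unit grid graph with exactly q.x−p.x horizontal steps and q.y−p.y vertical steps). -/
open scoped Classical

/-- Points of the digital plane. -/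
abbrev Pt : Type := ℤ × ℤ

/-- `q` lies in the closed first quadrant of `p`. -/
def Quad1 (p q : Pt) : Prop := p.1 ≤ q.1 ∧ p.2 ≤ q.2

/-- The number of elements `y` of the finite set `J` with `y ≺ x` or `y = x`. -/
noncomputable def rankLE (lt : ℤ → ℤ → Prop) (J : Finset ℤ) (x : ℤ) : ℤ :=
  ((J.filter fun y => lt y x ∨ y = x).card : ℤ)

/-- `x` is among the `k` smallest elements of `J` with respect to the linear order `lt`. -/
def AmongSmallest (lt : ℤ → ℤ → Prop) (J : Finset ℤ) (k x : ℤ) : Prop :=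
  x ∈ J ∧ rankLE lt J x ≤ k

/-- The interval `I(p,q) = [p.x+p.y, q.x+q.y-1]`. -/
noncomputable def Ival (p q : Pt) : Finset ℤ := Finset.Icc (p.1 + p.2) (q.1 + q.2 - 1)

/-- Membership in `H(lt,p,q)`: the `q.x - p.x` smallest elements of `I(p,q)` w.r.t. `lt`. -/
def Hmem (lt : ℤ → ℤ → Prop) (p q : Pt) (a : ℤ) : Prop :=
  AmongSmallest lt (Ival p q) (q.1 - p.1) a

/-- The digital segment `R(lt,p,q)` for `q ∈ Q¹_p`, generated by the linear order `lt`. -/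
noncomputable def seg (lt : ℤ → ℤ → Prop) (p q : Pt) : Set Pt :=
  {r : Pt | p.1 ≤ r.1 ∧ r.1 ≤ q.1 ∧ p.2 ≤ r.2 ∧ r.2 ≤ q.2 ∧
    p.1 + p.2 ≤ r.1 + r.2 ∧ r.1 + r.2 ≤ q.1 + q.2 ∧
    r.1 - p.1 =
      (((Finset.Icc (p.1 + p.2) (r.1 + r.2 - 1)).filter fun a => Hmem lt p q a).card : ℤ)}

/-- `(t₁,t₂)` is a witness to the violation of (S3) for the pair of sets `(S,S')`. -/
def Witness (S S' : Set Pt) (t₁ t₂ : Pt) : Prop :=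
  t₁ ∈ S ∧ t₁ ∈ S' ∧ t₂ ∈ S ∧ t₂ ∈ S' ∧
  t₁.1 + t₁.2 < t₂.1 + t₂.2 ∧
  ((t₁.1 + 1, t₁.2) : Pt) ∈ S ∧ ((t₁.1, t₁.2 + 1) : Pt) ∈ S' ∧
  ((t₂.1, t₂.2 - 1) : Pt) ∈ S ∧ ((t₂.1 - 1, t₂.2) : Pt) ∈ S'

/-- `a ≠ b` form a bad pair for `(lt,p)` and `(lt',p')`, where `p.x ≤ p'.x`. -/
def BadPair (lt lt' : ℤ → ℤ → Prop) (p p' : Pt) (a b : ℤ) : Prop :=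
  a ≠ b ∧ ∃ C ℓ : ℤ, p.1 + p.2 ≤ C ∧ p'.1 + p'.2 ≤ C ∧
    a ∈ Finset.Icc (p.1 + p.2) (C - 1) ∧ b ∈ Finset.Icc (p.1 + p.2) (C - 1) ∧
    a ∈ Finset.Icc (p'.1 + p'.2) (C - 1) ∧ b ∈ Finset.Icc (p'.1 + p'.2) (C - 1) ∧
    AmongSmallest lt (Finset.Icc (p.1 + p.2) (C - 1)) ℓ a ∧
    ¬ AmongSmallest lt (Finset.Icc (p.1 + p.2) (C - 1)) ℓ b ∧
    AmongSmallest lt' (Finset.Icc (p'.1 + p'.2) (C - 1)) (ℓ - (p'.1 - p.1)) b ∧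
    ¬ AmongSmallest lt' (Finset.Icc (p'.1 + p'.2) (C - 1)) (ℓ - (p'.1 - p.1)) a

/-- Bad pair for arbitrary `p, p'`: for `p.x > p'.x` the roles of `p` and `p'` are exchanged. -/
def BadPairSym (lt lt' : ℤ → ℤ → Prop) (p p' : Pt) (a b : ℤ) : Prop :=
  (p.1 ≤ p'.1 ∧ BadPair lt lt' p p' a b) ∨ (p'.1 ≤ p.1 ∧ BadPair lt' lt p' p a b)

/-- Adjacency in the unit grid graph on `ℤ²`. -/
def GridAdj (u v : Pt) : Prop := |u.1 - v.1| + |u.2 - v.2| = 1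

/-- `S` is the vertex set of a path from `p` to `q` in the unit grid graph. -/
def IsGridPath (S : Set Pt) (p q : Pt) : Prop :=
  ∃ (n : ℕ) (f : ℕ → Pt), f 0 = p ∧ f n = q ∧
    (∀ i, i < n → GridAdj (f i) (f (i + 1))) ∧
    (∀ i j, i ≤ n → j ≤ n → f i = f j → i = j) ∧
    S = {r : Pt | ∃ i, i ≤ n ∧ f i = r}

/-- The pair `p, q` has nonnegative slope. -/
def NonnegPair (p q : Pt) : Prop := (p.1 ≤ q.1 ∧ p.2 ≤ q.2) ∨ (q.1 ≤ p.1 ∧ q.2 ≤ p.2)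

/-- A nonnegative-slope digital segment system `R` is a CDS: properties (S1)-(S5). -/
def IsCDS (R : Pt → Pt → Set Pt) : Prop :=
  ∀ p q : Pt, NonnegPair p q →
    IsGridPath (R p q) p q ∧
    R p q = R q p ∧
    (∀ r s : Pt, r ∈ R p q → s ∈ R p q → NonnegPair r s → R r s ⊆ R p q) ∧
    (∃ r : Pt, r ∉ R p q ∧ NonnegPair p r ∧ R p q ⊆ R p r) ∧
    (p.1 = q.1 → ∀ r ∈ R p q, r.1 = p.1) ∧
    (p.2 = q.2 → ∀ r ∈ R p q, r.2 = p.2)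

/-- The nonnegative-slope digital segment system generated by an assignment of
linear orders to the points of `ℤ²`. -/
noncomputable def genR (ord : Pt → ℤ → ℤ → Prop) (p q : Pt) : Set Pt :=
  if p.1 ≤ q.1 ∧ p.2 ≤ q.2 then seg (ord p) p q else seg (ord q) q p

/-- The orders `lt` at `p` and `lt'` at `p'` are in agreement. -/
def Agree (p p' : Pt) (lt lt' : ℤ → ℤ → Prop) : Prop :=
  ∀ a b : ℤ, max p.1 p'.1 + max p.2 p'.2 ≤ a → max p.1 p'.1 + max p.2 p'.2 ≤ b →
    (lt a b ↔ lt' a b)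

/-- Two digital segments are smooth: the antidiagonal distance function is
monotonically nondecreasing or nonincreasing on its domain. -/
def SmoothPair (S S' : Set Pt) : Prop :=
  (∀ r₁ s₁ r₂ s₂ : Pt, r₁ ∈ S → s₁ ∈ S' → r₂ ∈ S → s₂ ∈ S' →
      r₁.1 + r₁.2 = s₁.1 + s₁.2 → r₂.1 + r₂.2 = s₂.1 + s₂.2 →
      r₁.1 + r₁.2 ≤ r₂.1 + r₂.2 → r₁.1 - s₁.1 ≤ r₂.1 - s₂.1) ∨
  (∀ r₁ s₁ r₂ s₂ : Pt, r₁ ∈ S → s₁ ∈ S' → r₂ ∈ S → s₂ ∈ S' →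
      r₁.1 + r₁.2 = s₁.1 + s₁.2 → r₂.1 + r₂.2 = s₂.1 + s₂.2 →
      r₁.1 + r₁.2 ≤ r₂.1 + r₂.2 → r₂.1 - s₂.1 ≤ r₁.1 - s₁.1)

/-- The waterline assignment of linear orders. -/
def waterOrd (p : Pt) : ℤ → ℤ → Prop := fun a b =>
  if 0 ≤ p.2 then a < b
  else (p.1 ≤ a ∧ p.1 ≤ b ∧ a < b) ∨ (p.1 ≤ a ∧ b < p.1) ∨ (a < p.1 ∧ b < p.1 ∧ b < a)

/-- `p₃` has a conflicting priority with respect to `(lt,p)` and `(lt',p')`. -/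
def ConflictPriority (lt lt' : ℤ → ℤ → Prop) (p p' p₃ : Pt) : Prop :=
  ∃ a b : ℤ, a ∈ Ival p p₃ ∧ a ∈ Ival p' p₃ ∧ b ∈ Ival p p₃ ∧ b ∈ Ival p' p₃ ∧
    Hmem lt p p₃ b ∧ ¬ Hmem lt p p₃ a ∧ Hmem lt' p' p₃ a ∧ ¬ Hmem lt' p' p₃ b

/-!
The abscissa of the point of `R(≺,p,q)` on the antidiagonal `x + y = c` is forced: it is `p.x` plus
the number of elements of `H(≺,p,q)` below `c`. This count never decreases, and grows by at most as
much as `c` does, so both coordinates of the point are nondecreasing in `c`; as their sum is `c`,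
raising `c` by one raises exactly one of them by one. The path ends at `q` because `H(≺,p,q)` has
exactly `q.x - p.x` elements, the rank function of a linear order being a bijection from a finite
set with `n` elements onto `{1, …, n}`. By monotonicity all points in between lie in the rectangle
spanned by `p` and `q`.
-/

section Rank

variable {α : Type*} {r : α → α → Prop}

/-- The 1-based position of `x` in the finite set `J` sorted by the strict order `r`; it is the
`ℕ`-valued form of `rankLE`, over an arbitrary type. -/
noncomputable def rankIn (r : α → α → Prop) (J : Finset α) (x : α) : ℕ :=
  (J.filter fun y => r y x ∨ y = x).card

lemma rankIn_lt_rankIn [IsStrictOrder α r] {J : Finset α} {a b : α} (hb : b ∈ J) (hab : r a b) :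
    rankIn r J a < rankIn r J b := by
  refine Finset.card_lt_card ((Finset.ssubset_iff_of_subset ?_).2 ⟨b, by simp [hb], ?_⟩)
  · refine Finset.monotone_filter_right J fun y _ hya => Or.inl ?_
    rcases hya with hya | rfl
    exacts [trans_of r hya hab, hab]
  · simp only [Finset.mem_filter, not_and, not_or]
    exact fun _ => ⟨asymm_of r hab, (ne_of_irrefl hab).symm⟩

lemma rankIn_pos {J : Finset α} {x : α} (hx : x ∈ J) : 0 < rankIn r J x :=
  Finset.card_pos.2 ⟨x, by simp [hx]⟩

lemma rankIn_le_card (J : Finset α) (x : α) : rankIn r J x ≤ J.card :=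
  Finset.card_filter_le _ _

variable [IsStrictTotalOrder α r]

lemma injOn_rankIn (J : Finset α) : Set.InjOn (rankIn r J) J := by
  intro a ha b hb hab
  rcases trichotomous_of r a b with h | h | h
  · exact absurd hab (rankIn_lt_rankIn hb h).ne
  · exact h
  · exact absurd hab (rankIn_lt_rankIn ha h).ne'

lemma image_rankIn (J : Finset α) : J.image (rankIn r J) = Finset.Icc 1 J.card := by
  refine Finset.eq_of_subset_of_card_le (Finset.image_subset_iff.2 fun x hx => ?_) ?_
  · exact Finset.mem_Icc.2 ⟨rankIn_pos hx, rankIn_le_card J x⟩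
  · rw [Finset.card_image_of_injOn (injOn_rankIn J), Nat.card_Icc, Nat.add_sub_cancel]

lemma card_filter_rankIn_le (J : Finset α) (k : ℕ) :
    (J.filter fun x => rankIn r J x ≤ k).card = min k J.card :=
  have hinj : Set.InjOn (rankIn r J) (J.filter fun x => rankIn r J x ≤ k) :=
    (injOn_rankIn J).mono (Finset.coe_subset.2 (Finset.filter_subset _ J))
  calc (J.filter fun x => rankIn r J x ≤ k).card
      = ((J.filter fun x => rankIn r J x ≤ k).image (rankIn r J)).card :=
        (Finset.card_image_of_injOn hinj).symm
    _ = ((Finset.Icc 1 J.card).filter (· ≤ k)).card := by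
        rw [← image_rankIn (r := r) J, Finset.filter_image]
    _ = (Finset.Icc 1 (min k J.card)).card := by
        congr 1
        ext i
        simp only [Finset.mem_filter, Finset.mem_Icc]
        omega
    _ = min k J.card := by simp

end Rank

lemma rankLE_eq_rankIn (lt : ℤ → ℤ → Prop) (J : Finset ℤ) (x : ℤ) :
    rankLE lt J x = rankIn lt J x := by
  unfold rankLE rankIn
  congr!

lemma card_filter_amongSmallest (lt : ℤ → ℤ → Prop) [IsStrictTotalOrder ℤ lt] {J : Finset ℤ}
    {k : ℤ} (hk : 0 ≤ k) (hkJ : k ≤ J.card) :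
    ((J.filter fun x => AmongSmallest lt J k x).card : ℤ) = k := by
  lift k to ℕ using hk
  have hrank : (J.filter fun x => AmongSmallest lt J k x) = J.filter fun x => rankIn lt J x ≤ k :=
    Finset.filter_congr fun x hx => by
      rw [AmongSmallest, rankLE_eq_rankIn, Nat.cast_le, and_iff_right hx]
  rw [hrank, card_filter_rankIn_le, min_eq_left (Nat.cast_le.1 hkJ)]

lemma card_filter_Icc_sub_one_le_add (P : ℤ → Prop) (a : ℤ) {c d : ℤ} (hcd : c ≤ d) :
    (((Finset.Icc a (d - 1)).filter P).card : ℤ) ≤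
      ((Finset.Icc a (c - 1)).filter P).card + (d - c) := by
  have hcover : (Finset.Icc a (d - 1)).filter P ⊆
      (Finset.Icc a (c - 1)).filter P ∪ Finset.Icc c (d - 1) := by
    intro x
    simp only [Finset.mem_filter, Finset.mem_Icc, Finset.mem_union]
    rintro ⟨⟨hax, hxd⟩, hPx⟩
    rcases lt_or_ge x c with hxc | hcx
    · exact Or.inl ⟨⟨hax, by omega⟩, hPx⟩
    · exact Or.inr ⟨hcx, hxd⟩
  have hcard := (Finset.card_le_card hcover).trans (Finset.card_union_le _ _)
  rw [Int.card_Icc] at hcard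
  omega

/-- The number of horizontal steps of `R(lt,p,q)` taken before the antidiagonal `x + y = c`, i.e.
the number of elements of `H(lt,p,q)` below `c`. -/
noncomputable def horizontalSteps (lt : ℤ → ℤ → Prop) (p q : Pt) (c : ℤ) : ℤ :=
  ((Finset.Icc (p.1 + p.2) (c - 1)).filter fun a => Hmem lt p q a).card

/-- The point of `R(lt,p,q)` on the antidiagonal `x + y = c`. Defined for every `c`, it lies in the
segment only for `c ∈ [p.x+p.y, q.x+q.y]`. -/
noncomputable def segPoint (lt : ℤ → ℤ → Prop) (p q : Pt) (c : ℤ) : Pt :=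
  (p.1 + horizontalSteps lt p q c, c - p.1 - horizontalSteps lt p q c)

section Segment

variable (lt : ℤ → ℤ → Prop) (p q : Pt)

lemma horizontalSteps_mono : Monotone (horizontalSteps lt p q) := by
  intro c d hcd
  unfold horizontalSteps
  gcongr

lemma segPoint_fst_add_snd (c : ℤ) : (segPoint lt p q c).1 + (segPoint lt p q c).2 = c := by
  simp only [segPoint]
  ring

lemma segPoint_mono : Monotone (segPoint lt p q) := by
  intro c d hcd
  have hx : horizontalSteps lt p q c ≤ horizontalSteps lt p q d := horizontalSteps_mono lt p q hcd
  have hy : horizontalSteps lt p q d ≤ horizontalSteps lt p q c + (d - c) :=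
    card_filter_Icc_sub_one_le_add _ _ hcd
  constructor <;> simp only [segPoint] <;> omega

lemma segPoint_add_one (c : ℤ) :
    segPoint lt p q (c + 1) = ((segPoint lt p q c).1 + 1, (segPoint lt p q c).2) ∨
      segPoint lt p q (c + 1) = ((segPoint lt p q c).1, (segPoint lt p q c).2 + 1) := by
  obtain ⟨hx, hy⟩ : segPoint lt p q c ≤ segPoint lt p q (c + 1) :=
    segPoint_mono lt p q (by omega)
  have hc := segPoint_fst_add_snd lt p q c
  have hc' := segPoint_fst_add_snd lt p q (c + 1)
  simp only [Prod.ext_iff]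
  omega

lemma segPoint_start : segPoint lt p q (p.1 + p.2) = p := by
  simp [segPoint, horizontalSteps]

variable {p q}

lemma segPoint_end [IsStrictTotalOrder ℤ lt] (hq : Quad1 p q) :
    segPoint lt p q (q.1 + q.2) = q := by
  obtain ⟨hx, hy⟩ := hq
  have hsteps : horizontalSteps lt p q (q.1 + q.2) = q.1 - p.1 := by
    refine card_filter_amongSmallest lt (J := Ival p q) (by omega) ?_
    rw [Ival, Int.card_Icc]
    omega
  ext <;> simp only [segPoint, hsteps] <;> ring

lemma seg_eq_image_segPoint [IsStrictTotalOrder ℤ lt] (hq : Quad1 p q) :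
    seg lt p q = segPoint lt p q '' Set.Icc (p.1 + p.2) (q.1 + q.2) := by
  ext r
  constructor
  · rintro ⟨-, -, -, -, hpr, hrq, hr⟩
    have hsteps : r.1 - p.1 = horizontalSteps lt p q (r.1 + r.2) := hr
    refine ⟨r.1 + r.2, ⟨hpr, hrq⟩, ?_⟩
    ext <;> simp only [segPoint, ← hsteps] <;> ring
  · rintro ⟨c, ⟨hpc, hcq⟩, rfl⟩
    obtain ⟨hx, hy⟩ : p ≤ segPoint lt p q c :=
      (segPoint_start lt p q).ge.trans (segPoint_mono lt p q hpc)
    obtain ⟨hx', hy'⟩ : segPoint lt p q c ≤ q :=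
      (segPoint_mono lt p q hcq).trans (segPoint_end lt hq).le
    have hsum := segPoint_fst_add_snd lt p q c
    refine ⟨hx, hx', hy, hy', hpc.trans hsum.ge, hsum.trans_le hcq, ?_⟩
    rw [hsum]
    exact add_sub_cancel_left p.1 _

end Segment

/-- the digital segment `R(≺,p,q)` is a monotone grid path from `p` to `q`:
it contains `p` and `q`, exactly one point of each coordinate sum `c ∈ [p.x+p.y, q.x+q.y]`,
and consecutive points differ by `(1,0)` or `(0,1)`. -/
theorem statement0 (lt : ℤ → ℤ → Prop) [IsStrictTotalOrder ℤ lt]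
    (p q : Pt) (hq : Quad1 p q) :
    p ∈ seg lt p q ∧ q ∈ seg lt p q ∧
    (∀ c : ℤ, p.1 + p.2 ≤ c → c ≤ q.1 + q.2 →
      ∃! r : Pt, r ∈ seg lt p q ∧ r.1 + r.2 = c) ∧
    (∀ r r' : Pt, r ∈ seg lt p q → r' ∈ seg lt p q →
      p.1 + p.2 ≤ r.1 + r.2 → r.1 + r.2 < q.1 + q.2 → r'.1 + r'.2 = r.1 + r.2 + 1 →
      r' = ((r.1 + 1, r.2) : Pt) ∨ r' = ((r.1, r.2 + 1) : Pt)) := by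
  have hpq : p.1 + p.2 ≤ q.1 + q.2 := add_le_add hq.1 hq.2
  rw [seg_eq_image_segPoint lt hq]
  refine ⟨⟨_, Set.left_mem_Icc.2 hpq, segPoint_start lt p q⟩,
    ⟨_, Set.right_mem_Icc.2 hpq, segPoint_end lt hq⟩, fun c hpc hcq => ?_, ?_⟩
  · refine ⟨segPoint lt p q c, ⟨⟨c, ⟨hpc, hcq⟩, rfl⟩, segPoint_fst_add_snd lt p q c⟩, ?_⟩
    rintro _ ⟨⟨d, -, rfl⟩, hd⟩
    rw [← hd, segPoint_fst_add_snd]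
  · rintro _ _ ⟨c, -, rfl⟩ ⟨d, -, rfl⟩ - - hd
    obtain rfl : d = c + 1 := by simpa only [segPoint_fst_add_snd] using hd
    exact segPoint_add_one lt p q c
end

section
/- Let p ∈ ℤ², let ≺ be a linear order on ℤ, and let q, q' ∈ Q¹_p. Then the pair of digital segments (R(≺,p,q), R(≺,p,q')) has no witness to the violation of (S3); that is, there do not exist points t₁, t₂ ∈ R(≺,p,q) ∩ R(≺,p,q') with t₁.x+t₁.y < t₂.x+t₂.y such that (t₁.x+1, t₁.y) ∈ R(≺,p,q), (t₁.x, t₁.y+1) ∈ R(≺,p,q'), (t₂.x, t₂.y−1) ∈ R(≺,p,q), and (t₂.x−1, t₂.y) ∈ R(≺,p,q'). -/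
open scoped Classical

/-!
Along a segment `seg lt p q` the step leaving the antidiagonal `x + y = c` is horizontal exactly
when `c ∈ H(lt,p,q)`. So if the first of two segments goes right and the second goes up at `t₁`,
then `a = t₁.x + t₁.y` lies in `H` but not in `H'`, and if they rejoin at `t₂` from below and from
the left, then `b = t₂.x + t₂.y - 1` lies in `H'` but not in `H`. Both `H` and `H'` consist of the
smallest elements of their intervals, so the first order puts `a` before `b` and the second puts
`b` before `a`. Since both segments pass through `t₁` and `t₂`, the antidiagonals `a` and `b` lie
in the range in which orders in agreement compare all pairs the same way, a contradiction; the
starting points of the segments need not coincide.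
-/

section Order

variable {lt : ℤ → ℤ → Prop} {J : Finset ℤ} {k a b : ℤ}

theorem rankLE_le_rankLE [IsTrans ℤ lt] (hba : lt b a) : rankLE lt J b ≤ rankLE lt J a := by
  refine Nat.cast_le.mpr (Finset.card_le_card (Finset.monotone_filter_right J ?_))
  rintro y - (hyb | rfl)
  · exact Or.inl (trans_of lt hyb hba)
  · exact Or.inl hba

theorem AmongSmallest.of_lt [IsTrans ℤ lt] (ha : AmongSmallest lt J k a) (hb : b ∈ J)
    (hba : lt b a) : AmongSmallest lt J k b :=
  ⟨hb, (rankLE_le_rankLE hba).trans ha.2⟩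

theorem AmongSmallest.lt_of_not_amongSmallest [IsTrans ℤ lt] [Std.Trichotomous lt]
    (ha : AmongSmallest lt J k a) (hbJ : b ∈ J) (hb : ¬ AmongSmallest lt J k b) : lt a b := by
  rcases trichotomous_of lt a b with hab | rfl | hba
  · exact hab
  · exact absurd ha hb
  · exact absurd (ha.of_lt hbJ hba) hb

end Order

theorem card_filter_Icc_eq_card_filter_Icc_sub_one_add {α : Type*} [LinearOrder α] [One α] [Sub α]
    [PredSubOrder α] [NoMinOrder α] [LocallyFiniteOrder α] (P : α → Prop) [DecidablePred P]
    {m n : α} (h : m ≤ n) :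
    ((Finset.Icc m n).filter P).card =
      ((Finset.Icc m (n - 1)).filter P).card + if P n then 1 else 0 := by
  rw [← Finset.insert_Icc_sub_one_right_eq_Icc h, Finset.filter_insert]
  split_ifs
  · exact Finset.card_insert_of_notMem (by simp)
  · rfl

section Segment

variable {lt lt' : ℤ → ℤ → Prop} {p p' q q' r s : Pt}

theorem add_mem_Ival_of_mem_seg (hr : r ∈ seg lt p q) (hs : s ∈ seg lt p q)
    (hrs : r.1 + r.2 < s.1 + s.2) : r.1 + r.2 ∈ Ival p q := by
  obtain ⟨-, -, -, -, hpr, -, -⟩ := hr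
  obtain ⟨-, -, -, -, -, hsq, -⟩ := hs
  exact Finset.mem_Icc.mpr ⟨hpr, by lia⟩

theorem fst_eq_add_ite_of_mem_seg (hr : r ∈ seg lt p q) (hs : s ∈ seg lt p q)
    (hrs : s.1 + s.2 = r.1 + r.2 + 1) :
    s.1 = r.1 + if Hmem lt p q (r.1 + r.2) then 1 else 0 := by
  obtain ⟨-, -, -, -, hpr, -, hr_card⟩ := hr
  obtain ⟨-, -, -, -, -, -, hs_card⟩ := hs
  rw [hrs, add_sub_cancel_right, card_filter_Icc_eq_card_filter_Icc_sub_one_add _ hpr] at hs_card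
  push_cast at hs_card
  linarith

theorem hmem_of_horizontal_step {x y : ℤ} (hr : (x, y) ∈ seg lt p q)
    (hs : (x + 1, y) ∈ seg lt p q) : Hmem lt p q (x + y) := by
  have hstep := fst_eq_add_ite_of_mem_seg hr hs (add_right_comm x 1 y)
  by_contra hnot
  simp [hnot] at hstep

theorem not_hmem_of_vertical_step {x y : ℤ} (hr : (x, y) ∈ seg lt p q)
    (hs : (x, y + 1) ∈ seg lt p q) : ¬ Hmem lt p q (x + y) := by
  intro hmem
  simpa [hmem] using fst_eq_add_ite_of_mem_seg hr hs (add_assoc x y 1).symm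

theorem lt_of_horizontal_step_of_vertical_step [IsTrans ℤ lt] [Std.Trichotomous lt] {x y z w : ℤ}
    (hr : (x, y) ∈ seg lt p q) (hr_right : (x + 1, y) ∈ seg lt p q)
    (hs : (z, w) ∈ seg lt p q) (hs_up : (z, w + 1) ∈ seg lt p q) : lt (x + y) (z + w) :=
  (hmem_of_horizontal_step hr hr_right).lt_of_not_amongSmallest
    (add_mem_Ival_of_mem_seg hs hs_up (by simp)) (not_hmem_of_vertical_step hs hs_up)

theorem max_add_max_le_of_mem_seg (hr : r ∈ seg lt p q) (hr' : r ∈ seg lt' p' q') :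
    max p.1 p'.1 + max p.2 p'.2 ≤ r.1 + r.2 := by
  obtain ⟨hp₁, -, hp₂, -⟩ := hr
  obtain ⟨hp'₁, -, hp'₂, -⟩ := hr'
  exact add_le_add (max_le hp₁ hp'₁) (max_le hp₂ hp'₂)

end Segment

theorem statement1_general (lt lt' : ℤ → ℤ → Prop) [IsStrictTotalOrder ℤ lt]
    [IsStrictTotalOrder ℤ lt'] (p p' q q' : Pt) (hagree : Agree p p' lt lt') :
    ¬ ∃ t₁ t₂ : Pt, Witness (seg lt p q) (seg lt' p' q') t₁ t₂ := by
  rintro ⟨⟨x, y⟩, ⟨z, w⟩, h₁, h₁', h₂, h₂', hlt, h₁_right, h₁'_up, h₂_below, h₂'_left⟩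
  have hab : lt (x + y) (z + (w - 1)) :=
    lt_of_horizontal_step_of_vertical_step h₁ h₁_right h₂_below (by simpa using h₂)
  have hba : lt' (z - 1 + w) (x + y) :=
    lt_of_horizontal_step_of_vertical_step h₂'_left (by simpa using h₂') h₁' h₁'_up
  rw [sub_add_eq_add_sub, add_sub_assoc] at hba
  have ha := max_add_max_le_of_mem_seg h₁ h₁'
  have hb : max p.1 p'.1 + max p.2 p'.2 ≤ z + (w - 1) := by lia
  exact asymm_of lt' ((hagree _ _ ha hb).mp hab) hba

/-- two digital segments emanating from the same point `p` into its first
quadrant, generated by the same linear order, have no witness to the violation of (S3). -/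
theorem statement1 (lt : ℤ → ℤ → Prop) [IsStrictTotalOrder ℤ lt]
    (p q q' : Pt) (hq : Quad1 p q) (hq' : Quad1 p q') :
    ¬ ∃ t₁ t₂ : Pt, Witness (seg lt p q) (seg lt p q') t₁ t₂ :=
  statement1_general lt lt p p q q' fun _ _ _ _ => Iff.rfl
end

section
/- (Lemma 1) Let p, p' ∈ ℤ² with p.x ≤ p'.x and let ≺, ≺' be linear orders on ℤ. If some integers a ≠ b form a bad pair for (≺,p) and (≺',p'), then there exists a point p₃ ∈ Q¹_p ∩ Q¹_{p'} and integers a, b ∈ I(p,p₃) ∩ I(p',p₃) such that a ∈ H(≺,p,p₃), b ∉ H(≺,p,p₃), b ∈ H(≺',p',p₃), and a ∉ H(≺',p',p₃) (i.e., the dividing line corresponding to p₃ splits a bad pair). -/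
open scoped Classical

/-! A choice of `C` and `ℓ` is the same as a choice of the point where the antidiagonal `x + y = C`
meets the vertical line `x = p.x + ℓ`; seen from `p'` this point is at horizontal distance
`ℓ - (p'.x - p.x)`, which is why that shift occurs in the definition of a bad pair. A set of `n`
integers is cut into two nonempty parts by its `k` smallest elements only if `0 ≤ k < n`, and for
both intervals this says that the point lies in the corresponding quadrant. -/

section AmongSmallest

variable {lt : ℤ → ℤ → Prop} {J : Finset ℤ} {k x : ℤ}

theorem AmongSmallest.nonneg (h : AmongSmallest lt J k x) : 0 ≤ k :=
  (Int.natCast_nonneg _).trans h.2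

theorem amongSmallest_of_card_le (hx : x ∈ J) (hk : (J.card : ℤ) ≤ k) : AmongSmallest lt J k x :=
  ⟨hx, (Int.ofNat_le.mpr (Finset.card_filter_le _ _)).trans hk⟩

end AmongSmallest

section Segment

variable {lt : ℤ → ℤ → Prop} {p q : Pt} {a b : ℤ}

theorem card_Ival_of_mem (ha : a ∈ Ival p q) :
    ((Ival p q).card : ℤ) = q.1 - p.1 + (q.2 - p.2) := by
  simp only [Ival, Finset.mem_Icc, Int.card_Icc] at ha ⊢
  lia

theorem Hmem.fst_le (h : Hmem lt p q a) : p.1 ≤ q.1 :=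
  sub_nonneg.mp (AmongSmallest.nonneg h)

theorem snd_lt_of_not_hmem (hb : b ∈ Ival p q) (h : ¬ Hmem lt p q b) : p.2 < q.2 := by
  contrapose! h
  apply amongSmallest_of_card_le hb
  linarith [card_Ival_of_mem hb]

theorem Hmem.quad1 (ha : Hmem lt p q a) (hb : b ∈ Ival p q) (hb' : ¬ Hmem lt p q b) :
    Quad1 p q :=
  ⟨ha.fst_le, (snd_lt_of_not_hmem hb hb').le⟩

theorem Ival_antidiagonal (p : Pt) (C x : ℤ) :
    Ival p (x, C - x) = Finset.Icc (p.1 + p.2) (C - 1) := by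
  simp only [Ival, add_sub_cancel]

theorem hmem_antidiagonal_iff (C x : ℤ) :
    Hmem lt p (x, C - x) a ↔
      AmongSmallest lt (Finset.Icc (p.1 + p.2) (C - 1)) (x - p.1) a := by
  rw [Hmem, Ival_antidiagonal]

end Segment

theorem statement2_general {p p' : Pt} {lt lt' : ℤ → ℤ → Prop} {a b : ℤ}
    (h : BadPair lt lt' p p' a b) :
    ∃ p₃ : Pt, Quad1 p p₃ ∧ Quad1 p' p₃ ∧
      a ∈ Ival p p₃ ∧ a ∈ Ival p' p₃ ∧ b ∈ Ival p p₃ ∧ b ∈ Ival p' p₃ ∧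
        Hmem lt p p₃ a ∧ ¬ Hmem lt p p₃ b ∧ Hmem lt' p' p₃ b ∧ ¬ Hmem lt' p' p₃ a := by
  obtain ⟨-, C, ℓ, -, -, haI, hbI, haI', hbI', ha, hb, hb', ha'⟩ := h
  have from_p : p.1 + ℓ - p.1 = ℓ := by ring
  have from_p' : p.1 + ℓ - p'.1 = ℓ - (p'.1 - p.1) := by ring
  rw [← from_p, ← hmem_antidiagonal_iff] at ha hb
  rw [← from_p', ← hmem_antidiagonal_iff] at ha' hb'
  rw [← Ival_antidiagonal _ C (p.1 + ℓ)] at haI hbI haI' hbI'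
  exact ⟨(p.1 + ℓ, C - (p.1 + ℓ)), ha.quad1 hbI hb, hb'.quad1 haI' ha',
    haI, haI', hbI, hbI', ha, hb, hb', ha'⟩

/-- Lemma 1: if `(≺,p)` and `(≺',p')` have a bad pair, then there is a point
`p₃ ∈ Q¹_p ∩ Q¹_{p'}` whose dividing line splits a bad pair. -/
theorem statement2 (p p' : Pt) (hx : p.1 ≤ p'.1) (lt lt' : ℤ → ℤ → Prop)
    [IsStrictTotalOrder ℤ lt] [IsStrictTotalOrder ℤ lt']
    (h : ∃ a b : ℤ, BadPair lt lt' p p' a b) :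
    ∃ p₃ : Pt, Quad1 p p₃ ∧ Quad1 p' p₃ ∧
      ∃ a b : ℤ, a ∈ Ival p p₃ ∧ a ∈ Ival p' p₃ ∧ b ∈ Ival p p₃ ∧ b ∈ Ival p' p₃ ∧
        Hmem lt p p₃ a ∧ ¬ Hmem lt p p₃ b ∧ Hmem lt' p' p₃ b ∧ ¬ Hmem lt' p' p₃ a := by
  obtain ⟨a, b, hab⟩ := h
  exact (statement2_general hab).imp fun _ ⟨hq, hq', hsplit⟩ => ⟨hq, hq', a, b, hsplit⟩
end

section
/- Let S ⊆ ℤ² be the point set of a nonnegative monotone lattice path (the set {r₀, …, r_n} of a finite sequence with r_{i+1} − r_i ∈ {(1,0), (0,1)} for all i) and let S' ⊆ ℤ² be the point set of a nonpositive monotone lattice path (the set {s₀, …, s_m} of a finite sequence with s_{j+1} − s_j ∈ {(1,0), (0,−1)} for all j). Then any two points r, r' ∈ S ∩ S' satisfy r.x = r'.x or r.y = r'.y. In particular, a segment with nonnegative slope and a segment with nonpositive slope can never have a witness to the violation of (S3). -/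
open scoped Classical

/-! A nonnegative path is a chain for the product order `≤`, a nonpositive path a chain for the
mirrored relation `Quad4`. Two points comparable in both senses agree in one coordinate. Given a
witness `(t₁, t₂)` in which `t₁` and `t₂` share a coordinate, one of the two forced neighbours
`t₁ + (1, 0)` and `t₂ - (0, 1)` in `S` is then incomparable with the other endpoint. -/

/-- `q` lies in the closed fourth quadrant of `p`. This is the order along which nonpositive
paths are chains, given as a relation on `α × β` rather than as `≤` on `α × βᵒᵈ` so that points
of both kinds of path have the same type. -/
def Quad4 {α β : Type*} [LE α] [LE β] (p q : α × β) : Prop := p.1 ≤ q.1 ∧ q.2 ≤ p.2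

section Chains

variable {α β : Type*}

instance [Preorder α] [Preorder β] : Std.Refl (Quad4 (α := α) (β := β)) :=
  ⟨fun _ => ⟨le_rfl, le_rfl⟩⟩

instance [Preorder α] [Preorder β] : IsTrans (α × β) Quad4 :=
  ⟨fun _ _ _ hpq hqr => ⟨hpq.1.trans hqr.1, hqr.2.trans hpq.2⟩⟩

theorem fst_eq_or_snd_eq_of_le_of_quad4 [PartialOrder α] [PartialOrder β] {u v : α × β}
    (hle : u ≤ v) (hquad : Quad4 u v ∨ Quad4 v u) : u.1 = v.1 ∨ u.2 = v.2 :=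
  hquad.symm.imp (fun h => hle.1.antisymm h.1) (fun h => hle.2.antisymm h.2)

theorem fst_eq_or_snd_eq_of_isChain [PartialOrder α] [PartialOrder β] {S S' : Set (α × β)}
    (hS : IsChain (· ≤ ·) S) (hS' : IsChain Quad4 S') {u v : α × β}
    (hu : u ∈ S ∩ S') (hv : v ∈ S ∩ S') : u.1 = v.1 ∨ u.2 = v.2 := by
  have hquad : Quad4 u v ∨ Quad4 v u := hS'.total hu.2 hv.2
  rcases hS.total hu.1 hv.1 with huv | hvu
  · exact fst_eq_or_snd_eq_of_le_of_quad4 huv hquad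
  · exact (fst_eq_or_snd_eq_of_le_of_quad4 hvu hquad.symm).imp Eq.symm Eq.symm

theorem snd_le_snd_of_isChain_of_fst_lt [Preorder α] [Preorder β] {S : Set (α × β)}
    (hS : IsChain (· ≤ ·) S) {u v : α × β} (hu : u ∈ S) (hv : v ∈ S) (h : u.1 < v.1) :
    u.2 ≤ v.2 :=
  (hS.total hu hv).elim (·.2) fun hvu => absurd hvu.1 h.not_ge

theorem fst_le_fst_of_isChain_of_snd_lt [Preorder α] [Preorder β] {S : Set (α × β)}
    (hS : IsChain (· ≤ ·) S) {u v : α × β} (hu : u ∈ S) (hv : v ∈ S) (h : u.2 < v.2) :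
    u.1 ≤ v.1 :=
  (hS.total hu hv).elim (·.1) fun hvu => absurd hvu.2 h.not_ge

theorem isChain_image_of_rel_succ {ι : Type*} [LinearOrder ι] [SuccOrder ι] [IsSuccArchimedean ι]
    {R : α → α → Prop} [IsTrans α R] {s : Set ι} (hs : s.OrdConnected) {f : ι → α}
    (hf : ∀ i, ¬IsMax i → i ∈ s → Order.succ i ∈ s → R (f i) (f (Order.succ i))) :
    IsChain R (f '' s) := by
  have rel_of_lt : ∀ i ∈ s, ∀ j ∈ s, i < j → R (f i) (f j) := by
    intro i hi j hj hij
    have hpath : Relation.TransGen (fun k l => R (f k) (f l)) i j :=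
      transGen_of_succ_of_lt _ (fun k hk => hf k hk.2.not_isMax (hs.out hi hj ⟨hk.1, hk.2.le⟩)
        (hs.out hi hj ⟨hk.1.trans (Order.le_succ k), Order.succ_le_of_lt hk.2⟩)) hij
    simpa only [Relation.transGen_eq_self] using hpath.lift (p := R) f fun _ _ h => h
  rintro _ ⟨i, hi, rfl⟩ _ ⟨j, hj, rfl⟩ hne
  rcases lt_or_gt_of_ne (ne_of_apply_ne f hne) with hij | hji
  · exact Or.inl (rel_of_lt i hi j hj hij)
  · exact Or.inr (rel_of_lt j hj i hi hji)

end Chains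

theorem isChain_le_of_nonneg_steps {n : ℕ} {r : ℕ → Pt}
    (hr : ∀ i, i < n → r (i + 1) - r i = ((1, 0) : Pt) ∨ r (i + 1) - r i = ((0, 1) : Pt)) :
    IsChain (· ≤ ·) (r '' {i | i ≤ n}) := by
  refine isChain_image_of_rel_succ Set.ordConnected_Iic fun i _ _ hi => ?_
  refine sub_nonneg.mp ?_
  rcases hr i hi with hstep | hstep <;> exact hstep ▸ by decide

theorem isChain_quad4_of_nonpos_steps {m : ℕ} {s : ℕ → Pt}
    (hs : ∀ j, j < m → s (j + 1) - s j = ((1, 0) : Pt) ∨ s (j + 1) - s j = ((0, -1) : Pt)) :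
    IsChain Quad4 (s '' {j | j ≤ m}) := by
  refine isChain_image_of_rel_succ Set.ordConnected_Iic fun j _ _ hj => ?_
  suffices 0 ≤ (s (j + 1) - s j).1 ∧ (s (j + 1) - s j).2 ≤ 0 from
    ⟨sub_nonneg.mp this.1, sub_nonpos.mp this.2⟩
  rcases hs j hj with hstep | hstep <;> exact hstep ▸ by decide

theorem not_witness_of_isChain {S S' : Set Pt} (hS : IsChain (· ≤ ·) S)
    (hS' : IsChain Quad4 S') (t₁ t₂ : Pt) : ¬Witness S S' t₁ t₂ := by
  rintro ⟨ht₁, ht₁', ht₂, ht₂', hlt, hright, -, hbelow, -⟩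
  rcases fst_eq_or_snd_eq_of_isChain hS hS' ⟨ht₁, ht₁'⟩ ⟨ht₂, ht₂'⟩ with hx | hy
  · have : t₂.2 ≤ t₁.2 :=
      snd_le_snd_of_isChain_of_fst_lt (v := (t₁.1 + 1, t₁.2)) hS ht₂ hright (by simp [hx])
    omega
  · have : t₂.1 ≤ t₁.1 :=
      fst_le_fst_of_isChain_of_snd_lt (u := (t₂.1, t₂.2 - 1)) hS hbelow ht₁ (by simp [hy])
    omega

theorem statement4_general {S S' : Set Pt} (hS : IsChain (· ≤ ·) S) (hS' : IsChain Quad4 S') :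
    (∀ u v : Pt, u ∈ S → u ∈ S' → v ∈ S → v ∈ S' → u.1 = v.1 ∨ u.2 = v.2) ∧
    ¬ ∃ t₁ t₂ : Pt, Witness S S' t₁ t₂ :=
  ⟨fun _ _ hu hu' hv hv' => fst_eq_or_snd_eq_of_isChain hS hS' ⟨hu, hu'⟩ ⟨hv, hv'⟩,
    fun ⟨t₁, t₂, h⟩ => not_witness_of_isChain hS hS' t₁ t₂ h⟩

/-- a nonnegative monotone lattice path and a nonpositive monotone lattice
path intersect only in points sharing an `x`- or a `y`-coordinate; in particular the pair
of point sets has no witness to the violation of (S3). -/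
theorem statement4 (n m : ℕ) (r s : ℕ → Pt)
    (hr : ∀ i, i < n → r (i + 1) - r i = ((1, 0) : Pt) ∨ r (i + 1) - r i = ((0, 1) : Pt))
    (hs : ∀ j, j < m → s (j + 1) - s j = ((1, 0) : Pt) ∨ s (j + 1) - s j = ((0, -1) : Pt)) :
    (∀ u v : Pt,
      u ∈ r '' {i | i ≤ n} → u ∈ s '' {j | j ≤ m} →
      v ∈ r '' {i | i ≤ n} → v ∈ s '' {j | j ≤ m} →
      u.1 = v.1 ∨ u.2 = v.2) ∧
    ¬ ∃ t₁ t₂ : Pt, Witness (r '' {i | i ≤ n}) (s '' {j | j ≤ m}) t₁ t₂ :=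
  statement4_general (isChain_le_of_nonneg_steps hr) (isChain_quad4_of_nonpos_steps hs)
end

section
/- Let ≺ be a single fixed linear order on ℤ and assign ≺_p := ≺ to every point p ∈ ℤ². Then the generated nonnegative-slope digital segment system satisfies all five properties (S1)–(S5), i.e., it is a CDS. -/
open scoped Classical

/-!
Write `|r|` for `r.1 + r.2`. The segment from `p` to `q` moves right at the antidiagonals `|r| = a`
with `a` among the `q.1 - p.1` smallest elements of `I(p,q)`, and up at the others, so it is the
graph of a function of `|r|` that grows by `0` or `1` at each step. If `r` and `s` lie on it, the
right moves between `r` and `s` form an initial segment, of size `s.1 - r.1`, of `I(r,s)`; hence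
they are the right moves of the segment from `r` to `s`, which is (S3). For (S4), extend the segment
by one point: if the new index is a right move when the endpoint is moved up, it stays one when the
endpoint is moved right instead, since then one more index is selected.
-/

section Smallest

/-- The finite set of the `k` smallest elements of `J` with respect to `lt`; it is empty for
negative `k` and all of `J` for `k` beyond the cardinality of `J`. -/
noncomputable def smallest (lt : ℤ → ℤ → Prop) (J : Finset ℤ) (k : ℤ) : Finset ℤ :=
  J.filter fun x => rankLE lt J x ≤ k

variable {lt : ℤ → ℤ → Prop} {J H : Finset ℤ} {k l x y : ℤ}

theorem mem_smallest : x ∈ smallest lt J k ↔ AmongSmallest lt J k x :=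
  Finset.mem_filter

theorem smallest_subset : smallest lt J k ⊆ J :=
  Finset.filter_subset _ _

theorem smallest_mono (h : k ≤ l) : smallest lt J k ⊆ smallest lt J l :=
  Finset.monotone_filter_right J fun _ _ hx => le_trans hx h

variable [IsStrictTotalOrder ℤ lt]

theorem rankLE_lt_rankLE (hx : x ∈ J) (hyx : lt y x) : rankLE lt J y < rankLE lt J x := by
  refine Nat.cast_lt.2 (Finset.card_lt_card <| (Finset.ssubset_iff_of_subset ?_).2 ⟨x, ?_, ?_⟩)
  · refine Finset.monotone_filter_right J fun z _ hz => Or.inl ?_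
    rcases hz with hzy | rfl
    exacts [_root_.trans hzy hyx, hyx]
  · exact Finset.mem_filter.2 ⟨hx, Or.inr rfl⟩
  · intro hmem
    rcases (Finset.mem_filter.1 hmem).2 with hxy | rfl
    exacts [asymm hxy hyx, irrefl _ hyx]

theorem injOn_rankLE : Set.InjOn (rankLE lt J) J := by
  intro x hx y hy hxy
  rcases trichotomous_of lt x y with h | h | h
  · exact absurd hxy (rankLE_lt_rankLE hy h).ne
  · exact h
  · exact absurd hxy (rankLE_lt_rankLE hx h).ne'

theorem image_rankLE : J.image (rankLE lt J) = Finset.Icc 1 (J.card : ℤ) := by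
  refine Finset.eq_of_subset_of_card_le (Finset.image_subset_iff.2 fun x hx => ?_) ?_
  · have hpos : 0 < (J.filter fun y => lt y x ∨ y = x).card :=
      Finset.card_pos.2 ⟨x, Finset.mem_filter.2 ⟨hx, Or.inr rfl⟩⟩
    exact Finset.mem_Icc.2
      ⟨Nat.one_le_cast.2 hpos, Nat.cast_le.2 (Finset.card_filter_le _ _)⟩
  · rw [Finset.card_image_of_injOn injOn_rankLE, Int.card_Icc]
    omega

theorem card_smallest (hk : 0 ≤ k) (hkJ : k ≤ J.card) : ((smallest lt J k).card : ℤ) = k := by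
  have himage : (smallest lt J k).image (rankLE lt J) = Finset.Icc 1 k := by
    rw [smallest, ← Finset.filter_image (p := (· ≤ k)), image_rankLE]
    ext i
    simp only [Finset.mem_filter, Finset.mem_Icc]
    omega
  rw [← Finset.card_image_of_injOn (injOn_rankLE (lt := lt).mono smallest_subset), himage,
    Int.card_Icc]
  omega

theorem eq_smallest_card (hHJ : H ⊆ J) (hlower : ∀ x ∈ H, ∀ y ∈ J, lt y x → y ∈ H) :
    H = smallest lt J H.card := by
  refine Finset.eq_of_subset_of_card_le (fun x hx => ?_) ?_
  · refine mem_smallest.2 ⟨hHJ hx, Nat.cast_le.2 (Finset.card_le_card fun y hy => ?_)⟩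
    obtain ⟨hyJ, hyx | rfl⟩ := Finset.mem_filter.1 hy
    exacts [hlower x hx y hyJ hyx, hx]
  · exact Nat.cast_le.1 (card_smallest (Nat.cast_nonneg _)
      (Nat.cast_le.2 (Finset.card_le_card hHJ))).le

theorem smallest_inter_eq_smallest {J' : Finset ℤ} (hJ : J' ⊆ J) :
    smallest lt J k ∩ J' = smallest lt J' (smallest lt J k ∩ J').card := by
  refine eq_smallest_card Finset.inter_subset_right fun x hx y hy hyx => ?_
  obtain ⟨hxJ, hxk⟩ := Finset.mem_filter.1 (Finset.mem_inter.1 hx).1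
  exact Finset.mem_inter.2
    ⟨Finset.mem_filter.2 ⟨hJ hy, (rankLE_lt_rankLE hxJ hyx).le.trans hxk⟩, hy⟩

end Smallest

section CountIco

/-- The number of elements of `H` in the half-open interval `[s, t)`, as an integer so that
differences of coordinates can be compared with it. -/
noncomputable def countIco (H : Finset ℤ) (s t : ℤ) : ℤ := ((H ∩ Finset.Ico s t).card : ℤ)

variable {H : Finset ℤ} {s t u : ℤ}

theorem countIco_nonneg : 0 ≤ countIco H s t :=
  Nat.cast_nonneg _

theorem countIco_self : countIco H s s = 0 := by
  simp [countIco]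

theorem countIco_le (h : s ≤ t) : countIco H s t ≤ t - s := by
  have hcard := Finset.card_le_card (Finset.inter_subset_right (s₁ := H) (s₂ := Finset.Ico s t))
  rw [Int.card_Ico] at hcard
  unfold countIco
  omega

theorem countIco_add (hst : s ≤ t) (htu : t ≤ u) :
    countIco H s t + countIco H t u = countIco H s u := by
  have hdisj : Disjoint (H ∩ Finset.Ico s t) (H ∩ Finset.Ico t u) :=
    (Finset.Ico_disjoint_Ico_consecutive s t u).mono Finset.inter_subset_right
      Finset.inter_subset_right
  rw [countIco, countIco, countIco, ← Finset.Ico_union_Ico_eq_Ico hst htu,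
    Finset.inter_union_distrib_left, Finset.card_union_of_disjoint hdisj, Nat.cast_add]

theorem countIco_add_one : countIco H s (s + 1) = if s ∈ H then 1 else 0 := by
  have hIco : Finset.Ico s (s + 1) = {s} := by
    ext
    simp only [Finset.mem_Ico, Finset.mem_singleton]
    omega
  rw [countIco, hIco]
  split_ifs with hs
  · rw [Finset.inter_singleton_of_mem hs, Finset.card_singleton, Nat.cast_one]
  · rw [Finset.inter_singleton_of_notMem hs, Finset.card_empty, Nat.cast_zero]

end CountIco

section GridPath

theorem gridAdj_comm {u v : Pt} : GridAdj u v ↔ GridAdj v u := by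
  rw [GridAdj, GridAdj, abs_sub_comm u.1, abs_sub_comm u.2]

theorem IsGridPath.symm {S : Set Pt} {p q : Pt} (h : IsGridPath S p q) : IsGridPath S q p := by
  obtain ⟨n, f, h0, hn, hadj, hinj, rfl⟩ := h
  refine ⟨n, fun i => f (n - i), by simpa using hn, by simpa using h0, fun i hi => ?_,
    fun i j hi hj hij => ?_, Set.ext fun r => ⟨?_, ?_⟩⟩
  · have hsucc : n - (i + 1) + 1 = n - i := by omega
    have hstep := hadj (n - (i + 1)) (by omega)
    rw [hsucc] at hstep
    exact gridAdj_comm.1 hstep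
  · have := hinj _ _ (Nat.sub_le n i) (Nat.sub_le n j) hij
    omega
  · rintro ⟨i, hi, rfl⟩
    exact ⟨n - i, Nat.sub_le n i, congrArg f (Nat.sub_sub_self hi)⟩
  · rintro ⟨i, -, rfl⟩
    exact ⟨n - i, Nat.sub_le n i, rfl⟩

theorem isGridPath_graph {X : ℤ → ℤ} {p q : Pt} (hpq : p.1 + p.2 ≤ q.1 + q.2)
    (hp : p.1 = X (p.1 + p.2)) (hq : q.1 = X (q.1 + q.2))
    (hX : ∀ t, p.1 + p.2 ≤ t → t < q.1 + q.2 → X (t + 1) = X t ∨ X (t + 1) = X t + 1) :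
    IsGridPath {r : Pt | p.1 + p.2 ≤ r.1 + r.2 ∧ r.1 + r.2 ≤ q.1 + q.2 ∧ r.1 = X (r.1 + r.2)}
      p q := by
  obtain ⟨n, hn⟩ := Int.le.dest hpq
  let f : ℤ → Pt := fun t => (X t, t - X t)
  have hf : ∀ r : Pt, r.1 = X (r.1 + r.2) → f (r.1 + r.2) = r := fun r hr =>
    Prod.ext hr.symm (by simp only [f]; omega)
  have hsum : ∀ t, (f t).1 + (f t).2 = t := fun t => add_sub_cancel (X t) t
  refine ⟨n, fun i => f (p.1 + p.2 + i), ?_, ?_, fun i hi => ?_, fun i j _ _ hij => ?_,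
    Set.ext fun r => ⟨?_, ?_⟩⟩
  · simpa using hf p hp
  · simpa only [hn] using hf q hq
  · have hstep := hX (p.1 + p.2 + i) (by omega) (by omega)
    simp only [GridAdj, f, Nat.cast_succ, ← add_assoc]
    rcases hstep with h | h <;> rw [h] <;> ring_nf <;> rfl
  · have : p.1 + p.2 + (i : ℤ) = p.1 + p.2 + j := by
      rw [← hsum (_ + i), ← hsum (_ + j)]
      exact congrArg (fun r : Pt => r.1 + r.2) hij
    omega
  · rintro ⟨hpr, hrq, hr⟩
    obtain ⟨i, hi⟩ := Int.le.dest hpr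
    exact ⟨i, by omega, by simpa only [hi] using hf r hr⟩
  · rintro ⟨i, hi, rfl⟩
    simp only [Set.mem_ofPred_eq, hsum]
    exact ⟨by omega, by omega, rfl⟩

end GridPath

section Segment

/-- The set `H(lt,p,q)` of the indices `a` at which the digital segment from `p` to `q` moves right,
from the antidiagonal `r.1 + r.2 = a` to the next one; at the other indices it moves up. -/
noncomputable def rightMoves (lt : ℤ → ℤ → Prop) (p q : Pt) : Finset ℤ :=
  smallest lt (Ival p q) (q.1 - p.1)

variable {lt : ℤ → ℤ → Prop} {p q r s u : Pt}

theorem Ival_eq_Ico : Ival p q = Finset.Ico (p.1 + p.2) (q.1 + q.2) :=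
  Finset.Icc_sub_one_right_eq_Ico _ _

theorem countIco_rightMoves (p q : Pt) (t : ℤ) :
    countIco (rightMoves lt p q) (p.1 + p.2) t =
      (((Finset.Icc (p.1 + p.2) (t - 1)).filter fun a => Hmem lt p q a).card : ℤ) := by
  rw [countIco, Finset.Icc_sub_one_right_eq_Ico]
  congr 2
  ext a
  rw [Finset.mem_inter, Finset.mem_filter, and_comm, rightMoves, mem_smallest, Hmem]

theorem fst_eq_of_mem_seg (hr : r ∈ seg lt p q) (h : p.1 = q.1) : r.1 = p.1 := by
  obtain ⟨hpr, hrq, -⟩ := hr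
  omega

theorem snd_eq_of_mem_seg (hr : r ∈ seg lt p q) (h : p.2 = q.2) : r.2 = p.2 := by
  obtain ⟨-, -, hpr, hrq, -⟩ := hr
  omega

variable [IsStrictTotalOrder ℤ lt]

theorem countIco_rightMoves_eq_sub (h : Quad1 p q) :
    countIco (rightMoves lt p q) (p.1 + p.2) (q.1 + q.2) = q.1 - p.1 := by
  obtain ⟨hfst, hsnd⟩ := h
  rw [countIco, ← Ival_eq_Ico, rightMoves, Finset.inter_eq_left.2 smallest_subset]
  refine card_smallest (by omega) ?_
  rw [Ival, Int.card_Icc]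
  omega

theorem mem_seg_iff (h : Quad1 p q) :
    r ∈ seg lt p q ↔ p.1 + p.2 ≤ r.1 + r.2 ∧ r.1 + r.2 ≤ q.1 + q.2 ∧
      r.1 = p.1 + countIco (rightMoves lt p q) (p.1 + p.2) (r.1 + r.2) := by
  rw [← sub_eq_iff_eq_add', countIco_rightMoves]
  refine ⟨fun ⟨_, _, _, _, hr⟩ => hr, fun ⟨hpr, hrq, hcount⟩ => ?_⟩
  have hright := countIco_rightMoves_eq_sub (lt := lt) h
  have hadd := countIco_add (H := rightMoves lt p q) hpr hrq
  have hnonneg := countIco_nonneg (H := rightMoves lt p q) (s := p.1 + p.2) (t := r.1 + r.2)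
  have hnonneg' := countIco_nonneg (H := rightMoves lt p q) (s := r.1 + r.2) (t := q.1 + q.2)
  have hle := countIco_le (H := rightMoves lt p q) hpr
  have hle' := countIco_le (H := rightMoves lt p q) hrq
  rw [← countIco_rightMoves] at hcount
  refine ⟨?_, ?_, ?_, ?_, hpr, hrq, countIco_rightMoves p q _ ▸ hcount⟩ <;> omega

theorem left_mem_seg (h : Quad1 p q) : p ∈ seg lt p q :=
  (mem_seg_iff h).2 ⟨le_rfl, add_le_add h.1 h.2, by rw [countIco_self, add_zero]⟩

theorem right_mem_seg (h : Quad1 p q) : q ∈ seg lt p q :=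
  (mem_seg_iff h).2
    ⟨add_le_add h.1 h.2, le_rfl, by rw [countIco_rightMoves_eq_sub h, add_sub_cancel]⟩

theorem isGridPath_seg (h : Quad1 p q) : IsGridPath (seg lt p q) p q := by
  have hseg : seg lt p q = {r : Pt | p.1 + p.2 ≤ r.1 + r.2 ∧ r.1 + r.2 ≤ q.1 + q.2 ∧
      r.1 = p.1 + countIco (rightMoves lt p q) (p.1 + p.2) (r.1 + r.2)} :=
    Set.ext fun r => mem_seg_iff h
  rw [hseg]
  refine isGridPath_graph (X := fun t => p.1 + countIco (rightMoves lt p q) (p.1 + p.2) t)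
    (add_le_add h.1 h.2) ((mem_seg_iff h).1 (left_mem_seg h)).2.2
    ((mem_seg_iff h).1 (right_mem_seg h)).2.2 fun t ht _ => ?_
  rw [← countIco_add ht (Int.le_add_one le_rfl), countIco_add_one]
  split_ifs <;> omega

theorem mem_seg_iff_of_mem_seg (h : Quad1 p q) (hr : r ∈ seg lt p q)
    (hru : r.1 + r.2 ≤ u.1 + u.2) (huq : u.1 + u.2 ≤ q.1 + q.2) :
    u ∈ seg lt p q ↔ u.1 = r.1 + countIco (rightMoves lt p q) (r.1 + r.2) (u.1 + u.2) := by
  obtain ⟨hpr, -, hcount⟩ := (mem_seg_iff h).1 hr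
  rw [mem_seg_iff h, and_iff_right (hpr.trans hru), and_iff_right huq, ← countIco_add hpr hru,
    ← add_assoc, ← hcount]

theorem rightMoves_eq_inter (h : Quad1 p q) (hr : r ∈ seg lt p q) (hs : s ∈ seg lt p q)
    (hrs : Quad1 r s) : rightMoves lt r s = rightMoves lt p q ∩ Ival r s := by
  obtain ⟨hpr, -, -⟩ := (mem_seg_iff h).1 hr
  obtain ⟨-, hsq, -⟩ := (mem_seg_iff h).1 hs
  have hsub : Ival r s ⊆ Ival p q := by
    rw [Ival_eq_Ico, Ival_eq_Ico]
    exact Finset.Ico_subset_Ico hpr hsq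
  have hcount : s.1 = r.1 + countIco (rightMoves lt p q) (r.1 + r.2) (s.1 + s.2) :=
    (mem_seg_iff_of_mem_seg h hr (add_le_add hrs.1 hrs.2) hsq).1 hs
  have hcard : ((rightMoves lt p q ∩ Ival r s).card : ℤ) = s.1 - r.1 := by
    rw [Ival_eq_Ico, ← countIco]
    omega
  rw [rightMoves, ← hcard]
  exact (smallest_inter_eq_smallest hsub).symm

theorem seg_subset_seg (h : Quad1 p q) (hr : r ∈ seg lt p q) (hs : s ∈ seg lt p q)
    (hrs : Quad1 r s) : seg lt r s ⊆ seg lt p q := by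
  intro u hu
  obtain ⟨hru, hus, hcount⟩ := (mem_seg_iff hrs).1 hu
  have hsq := ((mem_seg_iff h).1 hs).2.1
  have hsub : Finset.Ico (r.1 + r.2) (u.1 + u.2) ⊆ Ival r s := by
    rw [Ival_eq_Ico]
    exact Finset.Ico_subset_Ico_right hus
  rw [countIco, rightMoves_eq_inter h hr hs hrs, Finset.inter_assoc,
    Finset.inter_eq_right.2 hsub, ← countIco] at hcount
  exact (mem_seg_iff_of_mem_seg h hr hru (hus.trans hsq)).2 hcount

end Segment

section Extension

variable {lt : ℤ → ℤ → Prop} {p q r : Pt}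

theorem rightMoves_subset_rightMoves {p' q' : Pt} (hp : p.1 + p.2 = p'.1 + p'.2)
    (hq : q.1 + q.2 = q'.1 + q'.2) (h : q.1 - p.1 ≤ q'.1 - p'.1) :
    rightMoves lt p q ⊆ rightMoves lt p' q' := by
  rw [rightMoves, rightMoves, Ival, Ival, hp, hq]
  exact smallest_mono h

variable [IsStrictTotalOrder ℤ lt]

theorem mem_seg_of_last_step (hpr : Quad1 p r) (hpq : Quad1 p q)
    (hqr : q.1 + q.2 + 1 = r.1 + r.2)
    (h : r.1 - q.1 = if q.1 + q.2 ∈ rightMoves lt p r then 1 else 0) : q ∈ seg lt p r := by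
  have hle : p.1 + p.2 ≤ q.1 + q.2 := add_le_add hpq.1 hpq.2
  have htotal := countIco_rightMoves_eq_sub (lt := lt) hpr
  rw [← hqr, ← countIco_add hle (Int.le_add_one le_rfl), countIco_add_one, ← h] at htotal
  exact (mem_seg_iff hpr).2 ⟨hle, by omega, by omega⟩

theorem mem_seg_of_first_step (hrp : Quad1 r p) (hqp : Quad1 q p)
    (hrq : r.1 + r.2 + 1 = q.1 + q.2)
    (h : q.1 - r.1 = if r.1 + r.2 ∈ rightMoves lt r p then 1 else 0) : q ∈ seg lt r p := by
  refine (mem_seg_iff hrp).2 ⟨by omega, add_le_add hqp.1 hqp.2, ?_⟩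
  rw [← hrq, countIco_add_one, ← h, add_sub_cancel]

theorem exists_mem_seg_right (h : Quad1 p q) :
    ∃ r, Quad1 p r ∧ q.1 + q.2 < r.1 + r.2 ∧ q ∈ seg lt p r := by
  let up : Pt := (q.1, q.2 + 1)
  let right : Pt := (q.1 + 1, q.2)
  have hup : q.1 + q.2 + 1 = up.1 + up.2 := add_assoc _ _ _
  have hright : q.1 + q.2 + 1 = right.1 + right.2 := add_right_comm _ _ _
  by_cases hmem : q.1 + q.2 ∈ rightMoves lt p up
  · have hpr : Quad1 p right := ⟨Int.le_add_one h.1, h.2⟩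
    have hle : up.1 - p.1 ≤ right.1 - p.1 := sub_le_sub_right (Int.le_add_one le_rfl) _
    have hmem' : q.1 + q.2 ∈ rightMoves lt p right :=
      rightMoves_subset_rightMoves rfl (hup.symm.trans hright) hle hmem
    refine ⟨right, hpr, by omega, mem_seg_of_last_step hpr h hright ?_⟩
    rw [if_pos hmem', add_sub_cancel_left]
  · have hpr : Quad1 p up := ⟨h.1, Int.le_add_one h.2⟩
    refine ⟨up, hpr, by omega, mem_seg_of_last_step hpr h hup ?_⟩
    rw [if_neg hmem, sub_self]

theorem exists_mem_seg_left (h : Quad1 q p) :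
    ∃ r, Quad1 r p ∧ r.1 + r.2 < q.1 + q.2 ∧ q ∈ seg lt r p := by
  let down : Pt := (q.1, q.2 - 1)
  let left : Pt := (q.1 - 1, q.2)
  have hdown : down.1 + down.2 + 1 = q.1 + q.2 := by simp only [down]; omega
  have hleft : left.1 + left.2 + 1 = q.1 + q.2 := by simp only [left]; omega
  have hsum : down.1 + down.2 = left.1 + left.2 := by omega
  by_cases hmem : down.1 + down.2 ∈ rightMoves lt down p
  · have hrp : Quad1 left p := ⟨(Int.sub_le_self _ zero_le_one).trans h.1, h.2⟩
    have hle : p.1 - down.1 ≤ p.1 - left.1 := sub_le_sub_left (Int.sub_le_self _ zero_le_one) _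
    have hmem' : left.1 + left.2 ∈ rightMoves lt left p :=
      hsum ▸ rightMoves_subset_rightMoves hsum rfl hle hmem
    refine ⟨left, hrp, by omega, mem_seg_of_first_step hrp h hleft ?_⟩
    rw [if_pos hmem', sub_sub_cancel]
  · have hrp : Quad1 down p := ⟨h.1, (Int.sub_le_self _ zero_le_one).trans h.2⟩
    refine ⟨down, hrp, by omega, mem_seg_of_first_step hrp h hdown ?_⟩
    rw [if_neg hmem, sub_self]

end Extension

section Generated

variable {lt : ℤ → ℤ → Prop} {p q r s : Pt}

theorem genR_eq_seg (h : Quad1 p q) : genR (fun _ => lt) p q = seg lt p q :=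
  if_pos h

theorem genR_eq_seg_swap (h : Quad1 q p) : genR (fun _ => lt) p q = seg lt q p := by
  by_cases hpq : Quad1 p q
  · obtain rfl : p = q := Prod.ext (le_antisymm hpq.1 h.1) (le_antisymm hpq.2 h.2)
    exact genR_eq_seg h
  · exact if_neg hpq

theorem genR_comm (h : NonnegPair p q) : genR (fun _ => lt) p q = genR (fun _ => lt) q p := by
  rcases h with h | h
  · rw [genR_eq_seg h, genR_eq_seg_swap h]
  · rw [genR_eq_seg_swap h, genR_eq_seg h]

theorem fst_eq_of_mem_genR (h : NonnegPair p q) (hpq : p.1 = q.1)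
    (hr : r ∈ genR (fun _ => lt) p q) : r.1 = p.1 := by
  rcases h with h | h
  · exact fst_eq_of_mem_seg (genR_eq_seg h ▸ hr) hpq
  · exact (fst_eq_of_mem_seg (genR_eq_seg_swap h ▸ hr) hpq.symm).trans hpq.symm

theorem snd_eq_of_mem_genR (h : NonnegPair p q) (hpq : p.2 = q.2)
    (hr : r ∈ genR (fun _ => lt) p q) : r.2 = p.2 := by
  rcases h with h | h
  · exact snd_eq_of_mem_seg (genR_eq_seg h ▸ hr) hpq
  · exact (snd_eq_of_mem_seg (genR_eq_seg_swap h ▸ hr) hpq.symm).trans hpq.symm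

variable [IsStrictTotalOrder ℤ lt]

theorem isGridPath_genR (h : NonnegPair p q) : IsGridPath (genR (fun _ => lt) p q) p q := by
  rcases h with h | h
  · rw [genR_eq_seg h]
    exact isGridPath_seg h
  · rw [genR_eq_seg_swap h]
    exact (isGridPath_seg h).symm

theorem left_mem_genR (h : NonnegPair p q) : p ∈ genR (fun _ => lt) p q := by
  rcases h with h | h
  · rw [genR_eq_seg h]
    exact left_mem_seg h
  · rw [genR_eq_seg_swap h]
    exact right_mem_seg h

theorem genR_subset_seg (h : Quad1 p q) (hr : r ∈ seg lt p q) (hs : s ∈ seg lt p q)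
    (hrs : NonnegPair r s) : genR (fun _ => lt) r s ⊆ seg lt p q := by
  rcases hrs with hrs | hsr
  · rw [genR_eq_seg hrs]
    exact seg_subset_seg h hr hs hrs
  · rw [genR_eq_seg_swap hsr]
    exact seg_subset_seg h hs hr hsr

theorem genR_subset_genR (h : NonnegPair p q) (hr : r ∈ genR (fun _ => lt) p q)
    (hs : s ∈ genR (fun _ => lt) p q) (hrs : NonnegPair r s) :
    genR (fun _ => lt) r s ⊆ genR (fun _ => lt) p q := by
  rcases h with h | h
  · rw [genR_eq_seg h] at hr hs ⊢
    exact genR_subset_seg h hr hs hrs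
  · rw [genR_eq_seg_swap h] at hr hs ⊢
    exact genR_subset_seg h hr hs hrs

theorem exists_genR_extension (h : NonnegPair p q) :
    ∃ r, NonnegPair p r ∧ r ∉ genR (fun _ => lt) p q ∧ q ∈ genR (fun _ => lt) p r := by
  rcases h with h | h
  · obtain ⟨r, hpr, hlt, hq⟩ := exists_mem_seg_right (lt := lt) h
    refine ⟨r, Or.inl hpr, fun hr => ?_, by rwa [genR_eq_seg hpr]⟩
    rw [genR_eq_seg h, mem_seg_iff h] at hr
    exact hlt.not_ge hr.2.1
  · obtain ⟨r, hrp, hlt, hq⟩ := exists_mem_seg_left (lt := lt) h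
    refine ⟨r, Or.inr hrp, fun hr => ?_, by rwa [genR_eq_seg_swap hrp]⟩
    rw [genR_eq_seg_swap h, mem_seg_iff h] at hr
    exact hlt.not_ge hr.1

end Generated

/-- assigning one fixed linear order to every point of `ℤ²` generates a
nonnegative-slope digital segment system satisfying (S1)-(S5), i.e. a CDS. -/
theorem statement9 (lt : ℤ → ℤ → Prop) [IsStrictTotalOrder ℤ lt] :
    IsCDS (genR fun _ => lt) := by
  intro p q h
  obtain ⟨r, hpr, hr, hq⟩ := exists_genR_extension (lt := lt) h
  exact ⟨isGridPath_genR h, genR_comm h, fun _ _ hr hs hrs => genR_subset_genR h hr hs hrs,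
    ⟨r, hr, hpr, genR_subset_genR hpr (left_mem_genR hpr) hq h⟩,
    fun hpq _ => fst_eq_of_mem_genR h hpq, fun hpq _ => snd_eq_of_mem_genR h hpq⟩
end

section
/- Let p, p' ∈ ℤ² with p.y < 0 and p'.y ≥ 0, and let ≺_p, ≺_{p'} be the waterline orders assigned to p and p'. Then no two integers form a bad pair for (≺_p, p) and (≺_{p'}, p'). -/
open scoped Classical

/-!
Write `τ_p(x)` for `p.x` plus the rank of `x` in `[p.x + p.y, C - 1]`. The index shift in the
definition of a bad pair makes both cut-offs the same bound on `τ`, so a bad pair forces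
`τ_p(a) < τ_p'(a)` and `τ_p'(b) < τ_p(b)` up to exchanging `a` and `b`, and none exists once
`τ_p' ≤ τ_p`. If `p.y ≤ 0 ≤ p'.y`, the value `x + 1` separates the two. At `p'` the order is the
natural one, hence `τ_p'(x) = x + 1 - p'.y ≤ x + 1`. At `p` the interval contains `[p.x, x]`, all of
whose elements weakly precede `x`, hence `τ_p(x) ≥ x + 1`.
-/

/-- The threshold of `a` for the order `lt` at `p`: the least abscissa of a point `q` on the
antidiagonal `x + y = C` for which `a` is among the `q.x - p.x` smallest elements of
`[p.x + p.y, C - 1]` (for `a` in that interval). Measuring abscissas instead of ranks makes orders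
at different points directly comparable. -/
noncomputable def threshold (lt : ℤ → ℤ → Prop) (p : Pt) (C a : ℤ) : ℤ :=
  p.1 + rankLE lt (Finset.Icc (p.1 + p.2) (C - 1)) a

section BadPairs

variable {lt lt' : ℤ → ℤ → Prop} {p p' : Pt} {a b : ℤ}

lemma amongSmallest_Icc_iff_threshold_le {C k : ℤ} (ha : a ∈ Finset.Icc (p.1 + p.2) (C - 1)) :
    AmongSmallest lt (Finset.Icc (p.1 + p.2) (C - 1)) k a ↔ threshold lt p C a ≤ p.1 + k := by
  simp only [AmongSmallest, threshold, ha, true_and, add_le_add_iff_left]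

lemma BadPair.exists_threshold_lt (hab : BadPair lt lt' p p' a b) :
    ∃ C : ℤ,
      (a ∈ Finset.Icc (p.1 + p.2) (C - 1) ∧ a ∈ Finset.Icc (p'.1 + p'.2) (C - 1) ∧
        threshold lt p C a < threshold lt' p' C a) ∧
      (b ∈ Finset.Icc (p.1 + p.2) (C - 1) ∧ b ∈ Finset.Icc (p'.1 + p'.2) (C - 1) ∧
        threshold lt' p' C b < threshold lt p C b) := by
  obtain ⟨-, C, ℓ, -, -, ha, hb, ha', hb', hpa, hpb, hpb', hpa'⟩ := hab
  have cutoff_eq : p'.1 + (ℓ - (p'.1 - p.1)) = p.1 + ℓ := by ring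
  rw [amongSmallest_Icc_iff_threshold_le ha] at hpa
  rw [amongSmallest_Icc_iff_threshold_le hb, not_le] at hpb
  rw [amongSmallest_Icc_iff_threshold_le hb', cutoff_eq] at hpb'
  rw [amongSmallest_Icc_iff_threshold_le ha', cutoff_eq, not_le] at hpa'
  exact ⟨C, ⟨ha, ha', hpa.trans_lt hpa'⟩, ⟨hb, hb', hpb'.trans_lt hpb⟩⟩

lemma not_badPairSym_of_threshold_le
    (hle : ∀ C x : ℤ, x ∈ Finset.Icc (p.1 + p.2) (C - 1) → x ∈ Finset.Icc (p'.1 + p'.2) (C - 1) →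
      threshold lt' p' C x ≤ threshold lt p C x) :
    ¬ BadPairSym lt lt' p p' a b := by
  rintro (⟨-, hab⟩ | ⟨-, hab⟩)
  · obtain ⟨C, ⟨ha, ha', hlt⟩, -⟩ := hab.exists_threshold_lt
    exact (hle C a ha ha').not_gt hlt
  · obtain ⟨C, -, ⟨hb', hb, hlt⟩⟩ := hab.exists_threshold_lt
    exact (hle C b hb hb').not_gt hlt

end BadPairs

section Waterline

variable {p : Pt} {x : ℤ}

lemma rankLE_lt_Icc {s t : ℤ} (hx : x ∈ Finset.Icc s t) :
    rankLE (· < ·) (Finset.Icc s t) x = x - s + 1 := by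
  rw [Finset.mem_Icc] at hx
  have rank_eq_card : rankLE (· < ·) (Finset.Icc s t) x = (Finset.Icc s x).card := by
    unfold rankLE
    congr 2
    ext y
    simp only [Finset.mem_filter, Finset.mem_Icc]
    omega
  rw [rank_eq_card, Int.card_Icc_of_le _ _ (by omega)]
  ring

lemma waterOrd_of_nonneg (hp : 0 ≤ p.2) : waterOrd p = (· < ·) := by
  funext a b
  exact if_pos hp

lemma threshold_waterOrd_of_nonneg (hp : 0 ≤ p.2) {C : ℤ}
    (hx : x ∈ Finset.Icc (p.1 + p.2) (C - 1)) :
    threshold (waterOrd p) p C x = x + 1 - p.2 := by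
  rw [threshold, waterOrd_of_nonneg hp, rankLE_lt_Icc hx]
  ring

lemma waterOrd_iff_lt_of_le {a b : ℤ} (ha : p.1 ≤ a) (hb : p.1 ≤ b) :
    waterOrd p a b ↔ a < b := by
  unfold waterOrd
  split_ifs <;> omega

lemma Icc_subset_filter_waterOrd {J : Finset ℤ} (hJ : Finset.Icc p.1 x ⊆ J) :
    Finset.Icc p.1 x ⊆ J.filter fun y => waterOrd p y x ∨ y = x := by
  intro y hy
  obtain ⟨hpy, hyx⟩ := Finset.mem_Icc.mp hy
  rw [Finset.mem_filter, waterOrd_iff_lt_of_le hpy (hpy.trans hyx)]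
  exact ⟨hJ hy, hyx.lt_or_eq⟩

lemma add_one_le_threshold_waterOrd_of_nonpos (hp : p.2 ≤ 0) {C : ℤ} (hx : x < C) :
    x + 1 ≤ threshold (waterOrd p) p C x := by
  have hJ : Finset.Icc p.1 x ⊆ Finset.Icc (p.1 + p.2) (C - 1) :=
    Finset.Icc_subset_Icc (by omega) (by omega)
  have hcard := Finset.card_le_card (Icc_subset_filter_waterOrd hJ)
  rw [Int.card_Icc] at hcard
  unfold threshold rankLE
  omega

end Waterline

/-- a waterline order at a point below the waterline and one at a point on
or above the waterline have no bad pair. -/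
theorem statement12 (p p' : Pt) (h : p.2 < 0) (h' : 0 ≤ p'.2) :
    ∀ a b : ℤ, ¬ BadPairSym (waterOrd p) (waterOrd p') p p' a b := by
  intro a b
  refine not_badPairSym_of_threshold_le fun C x hx hx' => ?_
  have hxC : x < C := Int.le_sub_one_iff.mp (Finset.mem_Icc.mp hx).2
  calc threshold (waterOrd p') p' C x
      = x + 1 - p'.2 := threshold_waterOrd_of_nonneg h' hx'
    _ ≤ x + 1 := sub_le_self _ h'
    _ ≤ threshold (waterOrd p) p C x := add_one_le_threshold_waterOrd_of_nonpos h.le hxC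
end
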